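/- (UAV-recall-frequency expression, Eq. (14)) Fix area A > 0, battery capacity E_b > 0, circuit power P_c ≥ 0, user density λ ≥ 0, data rate S, and a normalized altitude x ≥ 0. For every coverage radius R > 0, the UAV-recall-frequency Φ(R) := (A/(π·R²))·(P_t(R, λ, R·x, S) + P_c)/E_b satisfies Φ(R) = (A/(π·E_b))·( λ·(2^S − 1)·Γ(x)·R² + P_c/R² ). -/

import Mathlib

open Real MeasureTheory intervalIntegral

/-!
The elevation angle depends only on `h / R`, so the average path loss is homogeneous of degree `2`
in `(R, h)`. Integrating a path loss homogeneous of degree `α` against `2πr dr` adds `2` to the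
degree, so the transmit power at radius `R` and altitude `Rx` is `R ^ (α + 2)` times the one at
radius `1` and altitude `x`; dividing by the area `πR²` of a cell leaves the factor `R ^ α`.
-/

theorem integral_mul_left_of_homogeneous {E : Type*} [NormedAddCommGroup E] [NormedSpace ℝ E]
    {F : ℝ → ℝ → E} {c α u v h : ℝ} (hc : 0 < c)
    (hF : ∀ r ∈ Set.uIoc u v, F (c * r) (c * h) = c ^ α • F r h) :
    ∫ r in c * u..c * v, F r (c * h) = c ^ (α + 1) • ∫ r in u..v, F r h := by
  calc ∫ r in c * u..c * v, F r (c * h)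
      = c • ∫ r in u..v, F (c * r) (c * h) :=
        (smul_integral_comp_mul_left (fun r ↦ F r (c * h)) c).symm
    _ = c • c ^ α • ∫ r in u..v, F r h := by
        rw [integral_congr_ae (.of_forall hF), intervalIntegral.integral_smul]
    _ = c ^ (α + 1) • ∫ r in u..v, F r h := by
        rw [smul_smul, rpow_add_one hc.ne', mul_comm]

/-- The elevation angle `θ(R, h)`, in degrees, at which a UAV at altitude `h` is seen from
horizontal distance `R`. It is `0` at `R = 0`, where the quotient `h / R` is `0`. -/
noncomputable def elevationAngle (R h : ℝ) : ℝ :=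
  180 / π * arctan (h / R)

/-- The probability `P₀(R, h)` of a line-of-sight link, logistic in the elevation angle with
environment parameters `a` and `b`. -/
noncomputable def losProbability (a b R h : ℝ) : ℝ :=
  1 / (1 + a * exp (-b * (elevationAngle R h - a)))

/-- The average path loss `L̄(R, h)`: the free-space loss `K * (R ^ 2 + h ^ 2)` weighted by the mean
of the line-of-sight and non-line-of-sight attenuations `η₀` and `η₁`. -/
noncomputable def averagePathLoss (a b η₀ η₁ K R h : ℝ) : ℝ :=
  K * (R ^ 2 + h ^ 2) * (η₁ + losProbability a b R h * (η₀ - η₁))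

theorem elevationAngle_mul_mul {c : ℝ} (hc : c ≠ 0) (R h : ℝ) :
    elevationAngle (c * R) (c * h) = elevationAngle R h := by
  rw [elevationAngle, elevationAngle, mul_div_mul_left h R hc]

theorem averagePathLoss_mul_mul (a b η₀ η₁ K : ℝ) {c : ℝ} (hc : c ≠ 0) (R h : ℝ) :
    averagePathLoss a b η₀ η₁ K (c * R) (c * h) =
      c ^ 2 * averagePathLoss a b η₀ η₁ K R h := by
  simp only [averagePathLoss, losProbability, elevationAngle_mul_mul hc]
  ring

theorem abs_losProbability_le_one {a : ℝ} (ha : 0 ≤ a) (b R h : ℝ) :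
    |losProbability a b R h| ≤ 1 := by
  have hden : 1 ≤ 1 + a * exp (-b * (elevationAngle R h - a)) :=
    le_add_of_nonneg_right (by positivity)
  rw [losProbability, abs_of_nonneg (by positivity)]
  exact div_le_one_of_le₀ hden (by positivity)

theorem intervalIntegrable_losProbability {a : ℝ} (ha : 0 ≤ a) (b h u v : ℝ) :
    IntervalIntegrable (fun R ↦ losProbability a b R h) volume u v := by
  have hmeas : Measurable fun R ↦ losProbability a b R h := by
    unfold losProbability elevationAngle
    fun_prop
  exact (intervalIntegrable_const (c := (1 : ℝ))).mono_fun hmeas.aestronglyMeasurable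
    (.of_forall fun R ↦ by simpa using abs_losProbability_le_one ha b R h)

theorem intervalIntegrable_averagePathLoss {a : ℝ} (ha : 0 ≤ a) (b η₀ η₁ K h u v : ℝ) :
    IntervalIntegrable (fun R ↦ averagePathLoss a b η₀ η₁ K R h) volume u v :=
  (intervalIntegrable_const.add
    ((intervalIntegrable_losProbability ha b h u v).mul_const (η₀ - η₁))).continuousOn_mul
      (by fun_prop)

theorem uav_recall_frequency_expression_general
    (α N₀ : ℝ) (L : ℝ → ℝ → ℝ) (Pt : ℝ → ℝ → ℝ → ℝ → ℝ) (Γ : ℝ → ℝ)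
    (hL : ∀ c R h : ℝ, 0 < c → 0 < R → L (c * R) (c * h) = c ^ α * L R h)
    (hPt : ∀ Rb lam h S : ℝ,
      Pt Rb lam h S = lam * ((2 : ℝ) ^ S - 1) * ∫ R in (0 : ℝ)..Rb, 2 * π * R * L R h * N₀)
    (hΓ : ∀ x : ℝ, Γ x = ∫ R in (0 : ℝ)..(1 : ℝ), 2 * π * R * L R x * N₀)
    (A Eb Pc lam S x : ℝ) (hEb : Eb ≠ 0)
    (hL_int : IntervalIntegrable (fun R ↦ R * L R x) volume 0 1)
    (Φ : ℝ → ℝ)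
    (hΦ : ∀ R : ℝ, Φ R = (A / (π * R ^ 2)) * (Pt R lam (R * x) S + Pc) / Eb)
    (R : ℝ) (hR : 0 < R) :
    Φ R = (A / (π * Eb)) * (lam * ((2 : ℝ) ^ S - 1) * Γ x * R ^ α + Pc / R ^ 2) := by
  have hdensity : ∀ r ∈ Set.uIoc 0 1,
      2 * π * (R * r) * L (R * r) (R * x) * N₀ = R ^ (α + 1) • (2 * π * r * L r x * N₀) := by
    intro r hr
    rw [Set.uIoc_of_le zero_le_one] at hr
    rw [hL R r x hR hr.1, rpow_add_one hR.ne', smul_eq_mul]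
    ring
  have hdisk : ∫ r in (0 : ℝ)..R, 2 * π * r * L r (R * x) * N₀ = R ^ (α + 2) * Γ x := by
    have h := integral_mul_left_of_homogeneous
      (F := fun r h ↦ 2 * π * r * L r h * N₀) hR hdensity
    rwa [mul_zero, mul_one, ← hΓ, smul_eq_mul, add_assoc, one_add_one_eq_two] at h
  have hpow : R ^ (α + 2) = R ^ α * R ^ 2 := by
    rw [rpow_add hR, rpow_two]
  rw [hΦ, hPt, hdisk, hpow]
  field_simp

/-- Eq. (14): The UAV-recall-frequency
`Φ(R) = (A/(πR²))·(P_t(R, λ, R·x, S) + P_c)/E_b` equals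
`(A/(π·E_b))·(λ·(2^S − 1)·Γ(x)·R² + P_c/R²)`. -/
theorem uav_recall_frequency_expression
    (a b η₀ η₁ K N₀ : ℝ) (ha : 0 < a) (hb : 0 < b) (hη₀ : 0 < η₀) (hη₁ : 0 < η₁)
    (hK : 0 < K) (hN₀ : 0 < N₀)
    (θ P₀ L : ℝ → ℝ → ℝ) (Pt : ℝ → ℝ → ℝ → ℝ → ℝ) (Γ : ℝ → ℝ)
    (hθ : ∀ R h : ℝ, θ R h = (180 / π) * arctan (h / R))
    (hP₀ : ∀ R h : ℝ, P₀ R h = 1 / (1 + a * exp (-b * (θ R h - a))))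
    (hL : ∀ R h : ℝ, L R h = K * (R ^ 2 + h ^ 2) * (η₁ + P₀ R h * (η₀ - η₁)))
    (hPt : ∀ Rb lam h S : ℝ,
      Pt Rb lam h S = lam * ((2 : ℝ) ^ S - 1) * ∫ R in (0 : ℝ)..Rb, 2 * π * R * L R h * N₀)
    (hΓ : ∀ x : ℝ, Γ x = ∫ R in (0 : ℝ)..(1 : ℝ), 2 * π * R * L R x * N₀)
    (A Eb Pc lam S x : ℝ) (hA : 0 < A) (hEb : 0 < Eb) (hPc : 0 ≤ Pc)
    (hlam : 0 ≤ lam) (hx : 0 ≤ x)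
    (Φ : ℝ → ℝ)
    (hΦ : ∀ R : ℝ, Φ R = (A / (π * R ^ 2)) * (Pt R lam (R * x) S + Pc) / Eb)
    (R : ℝ) (hR : 0 < R) :
    Φ R = (A / (π * Eb)) * (lam * ((2 : ℝ) ^ S - 1) * Γ x * R ^ 2 + Pc / R ^ 2) := by
  have hL_eq : L = averagePathLoss a b η₀ η₁ K := by
    ext R h
    rw [hL, hP₀, hθ, averagePathLoss, losProbability, elevationAngle]
  subst hL_eq
  simpa only [rpow_two] using
    uav_recall_frequency_expression_general 2 N₀ (averagePathLoss a b η₀ η₁ K) Pt Γ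
      (fun c R h hc _ ↦ by rw [rpow_two, averagePathLoss_mul_mul _ _ _ _ _ hc.ne'])
      hPt hΓ A Eb Pc lam S x hEb.ne'
      ((intervalIntegrable_averagePathLoss ha.le b η₀ η₁ K x 0 1).continuousOn_mul continuousOn_id)
      Φ hΦ R hR
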